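/- In the superdiffusive regime 3/4 < p < 1, assume S_n/n^{2p−1} → L almost surely and ℙ(L² > 0) > 0. For any α ∈ (0,1), letting t_{1−α/2} be the (1−α/2)-quantile of the standard Gaussian distribution, the conditional coverage probability ℙ( p ∈ [ p̂_n − t_{1−α/2}/√(V_n), p̂_n + t_{1−α/2}/√(V_n) ] ∣ {L² > 0} ) converges to 1 − α as n → ∞. -/

import Mathlib

open MeasureTheory ProbabilityTheory Filter Finset
open scoped BoundedContinuousFunction ENNReal NNReal Topology

noncomputable section

variable {Ω : Type*}

/-- Position of the elephant random walk: `S n = X 1 + ⋯ + X n`. -/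
def erwS (X : ℕ → Ω → ℝ) (n : ℕ) (ω : Ω) : ℝ :=
  ∑ k ∈ Finset.Icc 1 n, X k ω

/-- `V n = 4 ∑_{k=1}^{n-1} (S k / k)²`, the approximate conditional Fisher information. -/
def erwV (X : ℕ → Ω → ℝ) (n : ℕ) (ω : Ω) : ℝ :=
  4 * ∑ k ∈ Finset.Icc 1 (n - 1), (erwS X k ω / k) ^ 2

/-- The quasi-maximum likelihood estimator `p̂ n` of the memory parameter. -/
def erwPhat (X : ℕ → Ω → ℝ) (n : ℕ) (ω : Ω) : ℝ :=
  (∑ k ∈ Finset.Icc 1 (n - 1), (erwS X k ω / k) * (X (k + 1) ω + erwS X k ω / k)) /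
    (2 * ∑ k ∈ Finset.Icc 1 (n - 1), (erwS X k ω / k) ^ 2)

/-- The elephant random walk hypotheses with memory parameter `p ∈ [0,1]`:
the steps take values in `{-1, 1}`, are adapted to the filtration `ℱ`
(which plays the role of `σ(X_1, …, X_n)`), and
`E[X_{n+1} | ℱ_n] = (2p - 1) · S_n / n` almost surely. -/
def IsERW {m0 : MeasurableSpace Ω} (μ : Measure Ω) (ℱ : Filtration ℕ m0)
    (X : ℕ → Ω → ℝ) (p : ℝ) : Prop :=
  0 ≤ p ∧ p ≤ 1 ∧
  (∀ n, 1 ≤ n → ∀ ω, X n ω = 1 ∨ X n ω = -1) ∧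
  (∀ n, 1 ≤ n → Measurable[ℱ n] (X n)) ∧
  (∀ n, 1 ≤ n → μ[X (n + 1) | ℱ n] =ᵐ[μ] fun ω => (2 * p - 1) * (erwS X n ω / n))

/-!
Write `a = 2p - 1`. The numerator of `p̂ n - p` is a martingale with bounded increments
`(S k / k) (X (k + 1) - a S k / k)`. As `S k / k ^ a → L` with `1 / 2 < a < 1`, the squared
innovations tend to `1`, so by Toeplitz' lemma both the quadratic variation of this martingale and
`V n / 4` are asymptotic to `L² ∑ k ^ (2a - 2)`, which tends to infinity on `{L² > 0}`.

For bounded martingale differences `x k`, McLeish's product `∏ (1 + i x k)` is a martingale, and it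
is close to `exp (i ∑ x k + ∑ x k ^ 2 / 2)`. Hence the rescaled martingale converges stably to
`|L| N` with `N` standard Gaussian independent of the past. Stability makes the convergence joint
with `L` and preserves it under conditioning on `{L² > 0}`, where the factor `|L|` cancels against
the random normalisation `√(V n)` and only `N` remains.
-/

open Complex (I)

section McLeishProduct

/-- McLeish's product `∏_{k < n} (1 + i x_k)`: it linearises `exp (i ∑ x_k)`, and it is a complex
martingale when `x` is a sequence of martingale differences. -/
def mcLeishProd (x : ℕ → ℝ) (n : ℕ) : ℂ :=
  ∏ k ∈ range n, (1 + x k * I)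

lemma norm_one_add_ofReal_mul_I_le_exp (x : ℝ) : ‖1 + x * I‖ ≤ Real.exp (x ^ 2 / 2) := by
  refine le_of_sq_le_sq ?_ (Real.exp_pos _).le
  calc ‖1 + x * I‖ ^ 2 = x ^ 2 + 1 := by
        rw [← Complex.normSq_eq_norm_sq, ← Complex.ofReal_one, Complex.normSq_add_mul_I]
        ring
    _ ≤ Real.exp (x ^ 2) := Real.add_one_le_exp _
    _ = Real.exp (x ^ 2 / 2) ^ 2 := by rw [← Real.exp_nat_mul]; push_cast; ring_nf

lemma norm_mcLeishProd_le {x : ℕ → ℝ} {n : ℕ} {B : ℝ} (h : ∑ k ∈ range n, x k ^ 2 ≤ B) :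
    ‖mcLeishProd x n‖ ≤ Real.exp (B / 2) := by
  calc ‖mcLeishProd x n‖ = ∏ k ∈ range n, ‖1 + x k * I‖ := norm_prod _ _
    _ ≤ ∏ k ∈ range n, Real.exp (x k ^ 2 / 2) :=
        prod_le_prod (fun _ _ => norm_nonneg _) fun k _ => norm_one_add_ofReal_mul_I_le_exp (x k)
    _ = Real.exp ((∑ k ∈ range n, x k ^ 2) / 2) := by rw [← Real.exp_sum, sum_div]
    _ ≤ Real.exp (B / 2) := by gcongr

lemma mcLeishProd_succ (x : ℕ → ℝ) (n : ℕ) :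
    mcLeishProd x (n + 1) = mcLeishProd x n + x n • (mcLeishProd x n * I) := by
  rw [mcLeishProd, prod_range_succ, ← mcLeishProd, Complex.real_smul]
  ring

lemma mcLeishProd_eq_exp_sum_log (x : ℕ → ℝ) (n : ℕ) :
    mcLeishProd x n = Complex.exp (∑ k ∈ range n, Complex.log (1 + x k * I)) := by
  rw [Complex.exp_sum]
  refine prod_congr rfl fun k _ => (Complex.exp_log fun h => ?_).symm
  simpa using congrArg Complex.re h

lemma norm_log_one_add_ofReal_mul_I_sub_le {x : ℝ} (hx : |x| ≤ 1 / 2) :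
    ‖Complex.log (1 + x * I) - (x * I + (x ^ 2 / 2 : ℝ))‖ ≤ |x| ^ 3 := by
  have hnorm : ‖x * I‖ = |x| := by simp
  have htaylor : Complex.logTaylor (2 + 1) (x * I) = x * I + (x ^ 2 / 2 : ℝ) := by
    norm_num [Complex.logTaylor, sum_range_succ, mul_pow, neg_div]
  have h := Complex.norm_log_sub_logTaylor_le 2 (z := x * I) (by rw [hnorm]; linarith)
  rw [htaylor, hnorm] at h
  have hinv : (1 - |x|)⁻¹ ≤ 2 := by
    rw [inv_le_comm₀ (by linarith) two_pos]
    linarith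
  calc _ ≤ |x| ^ (2 + 1) * (1 - |x|)⁻¹ / ((2 : ℕ) + 1) := h
    _ ≤ |x| ^ (2 + 1) * 2 / ((2 : ℕ) + 1) := by gcongr
    _ ≤ |x| ^ 3 := by push_cast; nlinarith [pow_nonneg (abs_nonneg x) 3]

lemma norm_sum_log_one_add_ofReal_mul_I_sub_le {x : ℕ → ℝ} {δ : ℝ} (hδ : δ ≤ 1 / 2)
    (hx : ∀ k, |x k| ≤ δ) (n : ℕ) :
    ‖∑ k ∈ range n, Complex.log (1 + x k * I) -
      ((∑ k ∈ range n, x k : ℝ) * I + ((∑ k ∈ range n, x k ^ 2) / 2 : ℝ))‖ ≤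
      δ * ∑ k ∈ range n, x k ^ 2 := by
  calc _ = ‖∑ k ∈ range n, (Complex.log (1 + x k * I) - (x k * I + (x k ^ 2 / 2 : ℝ)))‖ := by
        push_cast
        rw [sum_sub_distrib, sum_add_distrib, sum_mul, sum_div]
    _ ≤ ∑ k ∈ range n, |x k| ^ 3 := norm_sum_le_of_le _ fun k _ =>
        norm_log_one_add_ofReal_mul_I_sub_le ((hx k).trans hδ)
    _ ≤ ∑ k ∈ range n, δ * x k ^ 2 := sum_le_sum fun k _ => by
        rw [pow_succ', sq_abs]
        exact mul_le_mul_of_nonneg_right (hx k) (sq_nonneg _)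
    _ = δ * ∑ k ∈ range n, x k ^ 2 := (mul_sum _ _ _).symm

lemma tendsto_exp_mul_mcLeishProd_sub_exp {x : ℕ → ℕ → ℝ} {δ : ℕ → ℝ} {v : ℝ}
    (hδ : Tendsto δ atTop (𝓝 0)) (hx : ∀ n k, |x n k| ≤ δ n)
    (hv : Tendsto (fun n => ∑ k ∈ range n, x n k ^ 2) atTop (𝓝 v)) :
    Tendsto (fun n => Real.exp (-v / 2) * mcLeishProd (x n) n -
      Complex.exp ((∑ k ∈ range n, x n k : ℝ) * I)) atTop (𝓝 0) := by
  set r : ℕ → ℂ := fun n =>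
    ∑ k ∈ range n, Complex.log (1 + x n k * I) - (∑ k ∈ range n, x n k : ℝ) * I with hr
  have hr_lim : Tendsto r atTop (𝓝 (v / 2 : ℝ)) := by
    have hmain : Tendsto (fun n => (((∑ k ∈ range n, x n k ^ 2) / 2 : ℝ) : ℂ)) atTop
        (𝓝 (v / 2 : ℝ)) := (Complex.continuous_ofReal.tendsto _).comp (hv.div_const 2)
    have herror : Tendsto (fun n => r n - ((∑ k ∈ range n, x n k ^ 2) / 2 : ℝ)) atTop (𝓝 0) := by
      refine squeeze_zero_norm' ?_ (by simpa using hδ.mul hv)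
      filter_upwards [hδ.eventually_le_const one_half_pos] with n hn
      rw [hr, sub_sub]
      exact norm_sum_log_one_add_ofReal_mul_I_sub_le hn (hx n) n
    simpa using herror.add hmain
  have hexp : Tendsto (fun n => Complex.exp ((-v / 2 : ℝ) + r n) - 1) atTop (𝓝 0) := by
    have h := (hr_lim.const_add ((-v / 2 : ℝ) : ℂ)).cexp.sub_const 1
    simpa [neg_div] using h
  refine squeeze_zero_norm (fun n => le_of_eq ?_) (tendsto_zero_iff_norm_tendsto_zero.1 hexp)
  have hfactor : Real.exp (-v / 2) * mcLeishProd (x n) n -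
      Complex.exp ((∑ k ∈ range n, x n k : ℝ) * I) =
      Complex.exp ((∑ k ∈ range n, x n k : ℝ) * I) * (Complex.exp ((-v / 2 : ℝ) + r n) - 1) := by
    rw [Complex.ofReal_exp, mcLeishProd_eq_exp_sum_log, mul_sub, mul_one, ← Complex.exp_add,
      ← Complex.exp_add, hr, add_left_comm, add_sub_cancel]
  rw [hfactor, norm_mul, Complex.norm_exp_ofReal_mul_I, one_mul]

end McLeishProduct

section MartingaleDifference

variable {m0 : MeasurableSpace Ω} {μ : Measure Ω} {ℱ : Filtration ℕ m0}
  {d : ℕ → Ω → ℝ} {K : ℝ}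

/-- Martingale differences bounded by `K`: `d k` is the increment between the times `k` and
`k + 1`. -/
structure IsBddMartingaleDiff (μ : Measure Ω) (ℱ : Filtration ℕ m0) (d : ℕ → Ω → ℝ) (K : ℝ) :
    Prop where
  measurable : ∀ k, Measurable[ℱ (k + 1)] (d k)
  abs_apply_le : ∀ k ω, |d k ω| ≤ K
  condExp_eq_zero : ∀ k, μ[d k | ℱ k] =ᵐ[μ] 0

namespace IsBddMartingaleDiff

lemma sq_le (h : IsBddMartingaleDiff μ ℱ d K) (k : ℕ) (ω : Ω) : d k ω ^ 2 ≤ K ^ 2 :=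
  sq_le_sq' (abs_le.1 (h.abs_apply_le k ω)).1 (abs_le.1 (h.abs_apply_le k ω)).2

lemma measurable_of_lt (h : IsBddMartingaleDiff μ ℱ d K) {k n : ℕ} (hkn : k < n) :
    Measurable[ℱ n] (d k) :=
  (h.measurable k).mono (ℱ.mono hkn) le_rfl

lemma measurable_sum (h : IsBddMartingaleDiff μ ℱ d K) (n : ℕ) :
    Measurable fun ω => ∑ k ∈ range n, d k ω :=
  Finset.measurable_fun_sum _ fun k _ => (h.measurable k).mono (ℱ.le _) le_rfl

lemma integrable [IsFiniteMeasure μ] (h : IsBddMartingaleDiff μ ℱ d K) (k : ℕ) :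
    Integrable (d k) μ :=
  .of_bound ((h.measurable k).mono (ℱ.le _) le_rfl).aestronglyMeasurable K
    (ae_of_all _ (h.abs_apply_le k))

lemma mul_predictable [IsFiniteMeasure μ] (h : IsBddMartingaleDiff μ ℱ d K) {y : ℕ → Ω → ℝ} {C : ℝ}
    (hy : ∀ k, Measurable[ℱ k] (y k)) (hyC : ∀ k ω, |y k ω| ≤ C) :
    IsBddMartingaleDiff μ ℱ (fun k ω => y k ω * d k ω) (C * K) where
  measurable k := ((hy k).mono (ℱ.mono k.le_succ) le_rfl).mul (h.measurable k)
  abs_apply_le k ω := by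
    rw [abs_mul]
    exact mul_le_mul (hyC k ω) (h.abs_apply_le k ω) (abs_nonneg _) ((abs_nonneg _).trans (hyC k ω))
  condExp_eq_zero k := by
    have hyd : Integrable (y k * d k) μ :=
      (h.integrable k).bdd_mul ((hy k).mono (ℱ.le k) le_rfl).aestronglyMeasurable
        (ae_of_all _ (hyC k))
    filter_upwards [condExp_mul_of_stronglyMeasurable_left (hy k).stronglyMeasurable hyd
      (h.integrable k), h.condExp_eq_zero k] with ω hpull hzero
    rw [show (fun ω => y k ω * d k ω) = y k * d k from rfl, hpull, Pi.mul_apply, hzero,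
      Pi.zero_apply, mul_zero]

lemma const_mul [IsFiniteMeasure μ] (h : IsBddMartingaleDiff μ ℱ d K) (c : ℝ) :
    IsBddMartingaleDiff μ ℱ (fun k ω => c * d k ω) (|c| * K) :=
  h.mul_predictable (fun _ => measurable_const) fun _ _ => le_rfl

lemma measurable_mcLeishProd (h : IsBddMartingaleDiff μ ℱ d K) (n : ℕ) :
    Measurable[ℱ n] fun ω => mcLeishProd (d · ω) n :=
  Finset.measurable_fun_prod _ fun _ hk => measurable_const.add
    ((Complex.measurable_ofReal.comp (h.measurable_of_lt (mem_range.1 hk))).mul_const I)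

lemma norm_mcLeishProd_le_exp (h : IsBddMartingaleDiff μ ℱ d K) (n : ℕ) (ω : Ω) :
    ‖mcLeishProd (d · ω) n‖ ≤ Real.exp (n * K ^ 2 / 2) := by
  refine norm_mcLeishProd_le ?_
  calc ∑ k ∈ range n, d k ω ^ 2 ≤ ∑ _k ∈ range n, K ^ 2 := sum_le_sum fun k _ => h.sq_le k ω
    _ = n * K ^ 2 := by rw [sum_const, card_range, nsmul_eq_mul]

lemma integrable_mcLeishProd [IsFiniteMeasure μ] (h : IsBddMartingaleDiff μ ℱ d K) (n : ℕ) :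
    Integrable (fun ω => mcLeishProd (d · ω) n) μ :=
  .of_bound ((h.measurable_mcLeishProd n).mono (ℱ.le n) le_rfl).aestronglyMeasurable _
    (ae_of_all _ (h.norm_mcLeishProd_le_exp n))

lemma martingale_mcLeishProd [IsFiniteMeasure μ] (h : IsBddMartingaleDiff μ ℱ d K) :
    Martingale (fun n ω => mcLeishProd (d · ω) n) ℱ μ := by
  refine martingale_nat (fun n => (h.measurable_mcLeishProd n).stronglyMeasurable)
    h.integrable_mcLeishProd fun n => ?_
  set P : Ω → ℂ := fun ω => mcLeishProd (d · ω) n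
  have hPm : StronglyMeasurable[ℱ n] fun ω => P ω * I :=
    ((h.measurable_mcLeishProd n).mul_const I).stronglyMeasurable
  have hdP : Integrable (d n • fun ω => P ω * I) μ :=
    ((h.integrable_mcLeishProd n).mul_const I).bdd_smul K
      ((h.measurable n).mono (ℱ.le _) le_rfl).aestronglyMeasurable (ae_of_all _ (h.abs_apply_le n))
  have hsucc : (fun ω => mcLeishProd (d · ω) (n + 1)) = P + d n • fun ω => P ω * I :=
    funext fun ω => mcLeishProd_succ _ n
  filter_upwards [condExp_add (h.integrable_mcLeishProd n) hdP (ℱ n),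
    condExp_smul_of_aestronglyMeasurable_right (h.integrable n) hdP hPm.aestronglyMeasurable,
    h.condExp_eq_zero n] with ω hadd hpull hzero
  rw [hsucc, hadd, Pi.add_apply, hpull, Pi.smul_apply', hzero, Pi.zero_apply, zero_smul, add_zero,
    condExp_of_stronglyMeasurable (ℱ.le n) (h.measurable_mcLeishProd n).stronglyMeasurable
      (h.integrable_mcLeishProd n)]

lemma integral_smul_mcLeishProd_eq [IsFiniteMeasure μ] (h : IsBddMartingaleDiff μ ℱ d K) {m n : ℕ}
    (hmn : m ≤ n) {Z : Ω → ℝ} (hZm : Measurable[ℱ m] Z) (hZ : Integrable Z μ) :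
    ∫ ω, Z ω • mcLeishProd (d · ω) n ∂μ = ∫ ω, Z ω • mcLeishProd (d · ω) m ∂μ := by
  have hZP : Integrable (Z • fun ω => mcLeishProd (d · ω) n) μ :=
    hZ.smul_bdd _ (h.integrable_mcLeishProd n).aestronglyMeasurable
      (ae_of_all _ (h.norm_mcLeishProd_le_exp n))
  calc ∫ ω, Z ω • mcLeishProd (d · ω) n ∂μ
      = ∫ ω, (μ[Z • fun ω => mcLeishProd (d · ω) n | ℱ m]) ω ∂μ := (integral_condExp (ℱ.le m)).symm
    _ = ∫ ω, Z ω • mcLeishProd (d · ω) m ∂μ := integral_congr_ae <| by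
        filter_upwards [condExp_smul_of_aestronglyMeasurable_left
          hZm.stronglyMeasurable.aestronglyMeasurable hZP (h.integrable_mcLeishProd n),
          h.martingale_mcLeishProd.condExp_ae_eq hmn] with ω hpull hmart
        rw [hpull, Pi.smul_apply', hmart]

end IsBddMartingaleDiff

/-- The martingale differences `d`, switched off as soon as the sum of their past squares exceeds
`c`. -/
def truncDiff (d : ℕ → Ω → ℝ) (c : ℝ) (k : ℕ) (ω : Ω) : ℝ :=
  if ∑ j ∈ range k, d j ω ^ 2 ≤ c then d k ω else 0

lemma truncDiff_eq_of_sum_sq_le {c : ℝ} {n : ℕ} {ω : Ω} (h : ∑ j ∈ range n, d j ω ^ 2 ≤ c)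
    {k : ℕ} (hk : k < n) : truncDiff d c k ω = d k ω :=
  if_pos <| (sum_le_sum_of_subset_of_nonneg (range_mono hk.le) fun _ _ _ => sq_nonneg _).trans h

lemma IsBddMartingaleDiff.trunc [IsFiniteMeasure μ] (h : IsBddMartingaleDiff μ ℱ d K) (c : ℝ) :
    IsBddMartingaleDiff μ ℱ (truncDiff d c) K := by
  have hmeas (k : ℕ) : Measurable[ℱ k] fun ω => ∑ j ∈ range k, d j ω ^ 2 :=
    Finset.measurable_fun_sum _ fun j hj => (h.measurable_of_lt (mem_range.1 hj)).pow_const 2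
  have hmul := h.mul_predictable (C := 1)
    (y := fun k ω => if ∑ j ∈ range k, d j ω ^ 2 ≤ c then 1 else 0)
    (fun k => .ite (measurableSet_le (hmeas k) measurable_const) measurable_const measurable_const)
    (fun k ω => by split_ifs <;> simp)
  have heq : truncDiff d c = fun k ω =>
      (if ∑ j ∈ range k, d j ω ^ 2 ≤ c then 1 else 0) * d k ω := by
    funext k ω
    rw [truncDiff, ite_mul, one_mul, zero_mul]
  rwa [heq, ← one_mul K]

lemma IsBddMartingaleDiff.sum_truncDiff_sq_le (h : IsBddMartingaleDiff μ ℱ d K) {c : ℝ}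
    (hc : 0 ≤ c) (n : ℕ) (ω : Ω) :
    ∑ k ∈ range n, truncDiff d c k ω ^ 2 ≤ c + K ^ 2 := by
  induction n with
  | zero => simpa using add_nonneg hc (sq_nonneg K)
  | succ n ih =>
    rw [sum_range_succ]
    by_cases hn : ∑ j ∈ range n, d j ω ^ 2 ≤ c
    · rw [sum_congr rfl fun k hk => by rw [truncDiff_eq_of_sum_sq_le hn (mem_range.1 hk)],
        truncDiff, if_pos hn]
      exact add_le_add hn (h.sq_le n ω)
    · simpa [truncDiff, hn] using ih

end MartingaleDifference

section StableConvergence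

variable {m0 : MeasurableSpace Ω} {μ : Measure Ω} {ℱ : Filtration ℕ m0}

lemma tendsto_integral_smul_zero_of_tendsto_zero {F : ℕ → Ω → ℂ} {B : ℝ}
    (hFm : ∀ n, AEStronglyMeasurable (F n) μ) (hFB : ∀ᶠ n in atTop, ∀ᵐ ω ∂μ, ‖F n ω‖ ≤ B)
    {Z : Ω → ℝ} (hZ : Integrable Z μ)
    (hlim : ∀ᵐ ω ∂μ, Tendsto (fun n => Z ω • F n ω) atTop (𝓝 0)) :
    Tendsto (fun n => ∫ ω, Z ω • F n ω ∂μ) atTop (𝓝 0) := by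
  rw [← integral_zero Ω ℂ]
  refine tendsto_integral_filter_of_dominated_convergence (fun ω => ‖Z ω‖ * B)
    (.of_forall fun n => hZ.1.smul (hFm n)) ?_ (hZ.norm.mul_const B) hlim
  filter_upwards [hFB] with n hn
  filter_upwards [hn] with ω hω
  rw [norm_smul]
  gcongr

lemma tendsto_integral_smul_zero_of_tendsto_integral_norm_sub {F : ℕ → Ω → ℂ} {B : ℝ}
    (hFm : ∀ n, AEStronglyMeasurable (F n) μ) (hFB : ∀ᶠ n in atTop, ∀ᵐ ω ∂μ, ‖F n ω‖ ≤ B)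
    {Z : Ω → ℝ} {Zs : ℕ → Ω → ℝ} (hZ : Integrable Z μ) (hZs : ∀ m, Integrable (Zs m) μ)
    (happrox : Tendsto (fun m => ∫ ω, ‖Zs m ω - Z ω‖ ∂μ) atTop (𝓝 0))
    (hlim : ∀ m, Tendsto (fun n => ∫ ω, Zs m ω • F n ω ∂μ) atTop (𝓝 0)) :
    Tendsto (fun n => ∫ ω, Z ω • F n ω ∂μ) atTop (𝓝 0) := by
  rw [NormedAddGroup.tendsto_nhds_zero]
  intro ε hε
  obtain ⟨m, hm⟩ : ∃ m, B * ∫ ω, ‖Zs m ω - Z ω‖ ∂μ < ε / 2 := by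
    have h := happrox.const_mul B
    rw [mul_zero] at h
    exact (h.eventually_lt_const (half_pos hε)).exists
  filter_upwards [hFB, (NormedAddGroup.tendsto_nhds_zero.1 (hlim m)) (ε / 2) (half_pos hε)]
    with n hn hmn
  have hint {Y : Ω → ℝ} (hY : Integrable Y μ) : Integrable (fun ω => Y ω • F n ω) μ :=
    hY.smul_bdd B (hFm n) hn
  have hdiff : ‖∫ ω, (Zs m ω - Z ω) • F n ω ∂μ‖ ≤ B * ∫ ω, ‖Zs m ω - Z ω‖ ∂μ := by
    rw [← integral_const_mul]
    refine norm_integral_le_of_norm_le (((hZs m).sub hZ).norm.const_mul B) ?_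
    filter_upwards [hn] with ω hω
    rw [norm_smul, mul_comm]
    gcongr
  calc ‖∫ ω, Z ω • F n ω ∂μ‖
      = ‖∫ ω, Zs m ω • F n ω ∂μ - ∫ ω, (Zs m ω - Z ω) • F n ω ∂μ‖ := by
        simp_rw [sub_smul]
        rw [integral_sub (hint (hZs m)) (hint hZ), sub_sub_cancel]
    _ ≤ ‖∫ ω, Zs m ω • F n ω ∂μ‖ + ‖∫ ω, (Zs m ω - Z ω) • F n ω ∂μ‖ := norm_sub_le _ _
    _ < ε / 2 + ε / 2 := add_lt_add_of_lt_of_le hmn (hdiff.trans hm.le)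
    _ = ε := add_halves ε

lemma tendsto_integral_norm_condExp_sub [IsFiniteMeasure μ] (Z : Ω → ℝ) :
    Tendsto (fun m => ∫ ω, ‖(μ[Z | ℱ m]) ω - (μ[Z | ⨆ n, ℱ n]) ω‖ ∂μ) atTop (𝓝 0) := by
  have h := (ENNReal.tendsto_toReal ENNReal.zero_ne_top).comp
    (tendsto_eLpNorm_condExp (μ := μ) (ℱ := ℱ) Z)
  refine h.congr fun m => ?_
  rw [Function.comp_apply, eLpNorm_one_eq_lintegral_enorm,
    ← integral_norm_eq_lintegral_enorm (integrable_condExp.sub integrable_condExp).1]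
  rfl

lemma integral_condExp_smul [IsFiniteMeasure μ] {m : MeasurableSpace Ω} (hm : m ≤ m0) {Z : Ω → ℝ}
    (hZ : Integrable Z μ) {F : Ω → ℂ} (hF : StronglyMeasurable[m] F)
    (hZF : Integrable (Z • F) μ) :
    ∫ ω, (μ[Z | m]) ω • F ω ∂μ = ∫ ω, Z ω • F ω ∂μ := by
  rw [← integral_condExp hm (f := fun ω => Z ω • F ω)]
  refine integral_congr_ae ?_
  filter_upwards [condExp_smul_of_aestronglyMeasurable_right hZ hZF hF.aestronglyMeasurable]
    with ω hω using hω.symm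

lemma tendsto_mcLeishProd_one {x : ℕ → ℕ → ℝ} (hx : ∀ k, Tendsto (fun n => x n k) atTop (𝓝 0))
    (m : ℕ) : Tendsto (fun n => mcLeishProd (x n) m) atTop (𝓝 1) := by
  simpa [mcLeishProd] using tendsto_finsetProd (range m) fun k _ =>
    (((Complex.continuous_ofReal.tendsto 0).comp (hx k)).mul_const I).const_add 1

lemma tendsto_integral_smul_mcLeishProd_sub_one_of_measurable [IsFiniteMeasure μ]
    {x : ℕ → ℕ → Ω → ℝ} {κ : ℕ → ℝ} (hx : ∀ n, IsBddMartingaleDiff μ ℱ (x n) (κ n))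
    (hκ : Tendsto κ atTop (𝓝 0)) {m : ℕ} {Z : Ω → ℝ} (hZm : Measurable[ℱ m] Z)
    (hZ : Integrable Z μ) :
    Tendsto (fun n => ∫ ω, Z ω • (mcLeishProd (x n · ω) n - 1) ∂μ) atTop (𝓝 0) := by
  have hlim : Tendsto (fun n => ∫ ω, Z ω • (mcLeishProd (x n · ω) m - 1) ∂μ) atTop (𝓝 0) := by
    refine tendsto_integral_smul_zero_of_tendsto_zero (B := Real.exp (m * 1 / 2) + ‖(1 : ℂ)‖)
      (fun n => (((hx n).integrable_mcLeishProd m).sub (integrable_const 1)).1) ?_ hZ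
      (ae_of_all _ fun ω => ?_)
    · have hκ_sq : Tendsto (fun n => κ n ^ 2) atTop (𝓝 0) := by simpa using hκ.pow 2
      filter_upwards [hκ_sq.eventually_le_const one_pos] with n hn
      refine ae_of_all _ fun ω => norm_sub_le_of_le (((hx n).norm_mcLeishProd_le_exp m ω).trans ?_)
        le_rfl
      gcongr
    · have hx_lim (k : ℕ) : Tendsto (fun n => x n k ω) atTop (𝓝 0) :=
        squeeze_zero_norm (fun n => (hx n).abs_apply_le k ω) hκ
      simpa using ((tendsto_mcLeishProd_one hx_lim m).sub_const 1).const_smul (Z ω)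
  refine hlim.congr' ?_
  filter_upwards [eventually_ge_atTop m] with n hn
  have hint (j : ℕ) : Integrable (fun ω => Z ω • mcLeishProd (x n · ω) j) μ :=
    hZ.smul_bdd _ ((hx n).integrable_mcLeishProd j).1
      (ae_of_all _ ((hx n).norm_mcLeishProd_le_exp j))
  simp_rw [smul_sub]
  rw [integral_sub (hint n) (hZ.smul_const 1), integral_sub (hint m) (hZ.smul_const 1),
    (hx n).integral_smul_mcLeishProd_eq hn hZm hZ]

/-- The martingale property gives the convergence against `ℱ m`-measurable weights, and Lévy's
upward theorem extends it to every integrable weight. -/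
lemma tendsto_integral_smul_mcLeishProd_sub_one [IsFiniteMeasure μ]
    {x : ℕ → ℕ → Ω → ℝ} {κ : ℕ → ℝ} {B : ℝ} (hx : ∀ n, IsBddMartingaleDiff μ ℱ (x n) (κ n))
    (hκ : Tendsto κ atTop (𝓝 0)) (hB : ∀ᶠ n in atTop, ∀ ω, ∑ k ∈ range n, x n k ω ^ 2 ≤ B)
    {Z : Ω → ℝ} (hZ : Integrable Z μ) :
    Tendsto (fun n => ∫ ω, Z ω • (mcLeishProd (x n · ω) n - 1) ∂μ) atTop (𝓝 0) := by
  have hsup : ⨆ n, ℱ n ≤ m0 := iSup_le ℱ.le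
  have hbound : ∀ᶠ n in atTop, ∀ᵐ ω ∂μ,
      ‖mcLeishProd (x n · ω) n - 1‖ ≤ Real.exp (B / 2) + ‖(1 : ℂ)‖ := by
    filter_upwards [hB] with n hn
    exact ae_of_all _ fun ω => norm_sub_le_of_le (norm_mcLeishProd_le (hn ω)) le_rfl
  have hint (n : ℕ) : Integrable (fun ω => mcLeishProd (x n · ω) n - 1) μ :=
    ((hx n).integrable_mcLeishProd n).sub (integrable_const 1)
  have hZ_sup : Tendsto (fun n => ∫ ω, (μ[Z | ⨆ n, ℱ n]) ω • (mcLeishProd (x n · ω) n - 1) ∂μ)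
      atTop (𝓝 0) :=
    tendsto_integral_smul_zero_of_tendsto_integral_norm_sub (fun n => (hint n).1) hbound
      integrable_condExp (fun _ => integrable_condExp) (tendsto_integral_norm_condExp_sub Z)
      fun m => tendsto_integral_smul_mcLeishProd_sub_one_of_measurable hx hκ
        stronglyMeasurable_condExp.measurable integrable_condExp
  refine hZ_sup.congr' ?_
  filter_upwards [hbound] with n hn
  exact integral_condExp_smul hsup hZ
    ((((hx n).measurable_mcLeishProd n).mono (le_iSup _ n) le_rfl).sub_const 1).stronglyMeasurable
    (hZ.smul_bdd _ (hint n).1 hn)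

variable {d : ℕ → Ω → ℝ} {K : ℝ} {b : ℕ → ℝ}

/-- The partial sums of `d`, normalised to have a variance of order one when the sum of the squares
is of order `b`. -/
def scaledSum (d : ℕ → Ω → ℝ) (b : ℕ → ℝ) (n : ℕ) (ω : Ω) : ℝ :=
  (∑ k ∈ range n, d k ω) / √(b n)

/-- The array `u d_k / √b_n`, switched off along row `n` as soon as the sum of the past squares of
`d` exceeds `C b_n`. -/
def scaledTruncDiff (d : ℕ → Ω → ℝ) (b : ℕ → ℝ) (C u : ℝ) (n k : ℕ) (ω : Ω) : ℝ :=
  u / √(b n) * truncDiff d (C * b n) k ω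

lemma tendsto_abs_div_sqrt_mul_zero (hb : Tendsto b atTop atTop) (u K : ℝ) :
    Tendsto (fun n => |u / √(b n)| * K) atTop (𝓝 0) := by
  simpa using ((Real.tendsto_sqrt_atTop.comp hb).const_div_atTop u).abs.mul_const K

lemma tendsto_exp_mul_mcLeishProd_scaledTruncDiff_sub_exp {ω : Ω} (hd : ∀ k, |d k ω| ≤ K)
    (hb : Tendsto b atTop atTop) {q C : ℝ}
    (hq : Tendsto (fun n => (∑ k ∈ range n, d k ω ^ 2) / b n) atTop (𝓝 q)) (hqC : q < C) (u : ℝ) :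
    Tendsto (fun n => Real.exp (-(u ^ 2 * q) / 2) *
        mcLeishProd (scaledTruncDiff d b C u n · ω) n -
      Complex.exp ((u * scaledSum d b n ω : ℝ) * I)) atTop (𝓝 0) := by
  have hsq : Tendsto (fun n => ∑ k ∈ range n, (u / √(b n) * d k ω) ^ 2) atTop (𝓝 (u ^ 2 * q)) := by
    refine (hq.const_mul (u ^ 2)).congr' ?_
    filter_upwards [hb.eventually_gt_atTop 0] with n hn
    simp_rw [mul_pow, div_pow, Real.sq_sqrt hn.le, ← mul_sum]
    ring
  have hmain := tendsto_exp_mul_mcLeishProd_sub_exp (x := fun n k => u / √(b n) * d k ω)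
    (tendsto_abs_div_sqrt_mul_zero hb u K) (fun n k => by rw [abs_mul]; gcongr; exact hd k) hsq
  refine hmain.congr' ?_
  filter_upwards [hb.eventually_gt_atTop 0, hq.eventually_le_const hqC] with n hbn hn
  rw [div_le_iff₀ hbn] at hn
  have hprod : mcLeishProd (scaledTruncDiff d b C u n · ω) n =
      mcLeishProd (fun k => u / √(b n) * d k ω) n :=
    prod_congr rfl fun k hk => by
      simp only [scaledTruncDiff, truncDiff_eq_of_sum_sq_le hn (mem_range.1 hk)]
  rw [hprod, ← mul_sum, div_mul_eq_mul_div, mul_div_assoc, scaledSum]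

lemma ae_nonneg_of_tendsto_sum_sq_div (hb : Tendsto b atTop atTop) {Q : Ω → ℝ}
    (hQ : ∀ᵐ ω ∂μ, Tendsto (fun n => (∑ k ∈ range n, d k ω ^ 2) / b n) atTop (𝓝 (Q ω))) :
    ∀ᵐ ω ∂μ, 0 ≤ Q ω := by
  filter_upwards [hQ] with ω hω
  refine ge_of_tendsto hω ?_
  filter_upwards [hb.eventually_ge_atTop 0] with n hn
  exact div_nonneg (sum_nonneg fun k _ => sq_nonneg _) hn

lemma norm_ofReal_exp_neg_sq_mul_div_two_le_one {q : ℝ} (hq : 0 ≤ q) (u : ℝ) :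
    ‖(Real.exp (-(u ^ 2 * q) / 2) : ℂ)‖ ≤ 1 := by
  rw [Complex.norm_real, Real.norm_of_nonneg (Real.exp_pos _).le, Real.exp_le_one_iff]
  nlinarith [mul_nonneg (sq_nonneg u) hq]

lemma integral_mul_eq_integral_re_smul_add {Z F : Ω → ℂ} {B : ℝ} (hZ : Integrable Z μ)
    (hFm : AEStronglyMeasurable F μ) (hFB : ∀ᵐ ω ∂μ, ‖F ω‖ ≤ B) :
    ∫ ω, Z ω * F ω ∂μ = ∫ ω, (Z ω).re • F ω ∂μ + (∫ ω, (Z ω).im • F ω ∂μ) * I := by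
  have hre : Integrable (fun ω => (Z ω).re • F ω) μ := hZ.re.smul_bdd B hFm hFB
  have him : Integrable (fun ω => (Z ω).im • F ω) μ := hZ.im.smul_bdd B hFm hFB
  rw [← integral_mul_const, ← integral_add hre (him.mul_const I)]
  refine integral_congr_ae (ae_of_all _ fun ω => ?_)
  simp only [Complex.real_smul]
  conv_lhs => rw [← Complex.re_add_im (Z ω)]
  ring

lemma tendsto_integral_norm_indicator_lt_sub {Z Q : Ω → ℝ} (hZ : Integrable Z μ)
    (hQ : AEMeasurable Q μ) :
    Tendsto (fun m : ℕ => ∫ ω, ‖{ω | Q ω < m}.indicator Z ω - Z ω‖ ∂μ) atTop (𝓝 0) := by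
  have hZs (m : ℕ) : Integrable ({ω | Q ω < m}.indicator Z) μ :=
    hZ.indicator₀ (nullMeasurableSet_lt hQ aemeasurable_const)
  rw [← integral_zero Ω ℝ]
  refine tendsto_integral_of_dominated_convergence (fun ω => ‖Z ω‖)
    (fun m => ((hZs m).sub hZ).norm.1) hZ.norm (fun m => ae_of_all _ fun ω => ?_)
    (ae_of_all _ fun ω => ?_)
  · by_cases hω : Q ω < m <;> simp [hω]
  · refine tendsto_const_nhds.congr' ?_
    filter_upwards [eventually_gt_atTop ⌈Q ω⌉₊] with m hm
    have hω : ω ∈ {ω | Q ω < m} := Nat.lt_of_ceil_lt hm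
    rw [Set.indicator_of_mem hω, sub_self, norm_zero]

namespace IsBddMartingaleDiff

lemma aemeasurable_of_tendsto_sum_sq_div (h : IsBddMartingaleDiff μ ℱ d K) {Q : Ω → ℝ}
    (hQ : ∀ᵐ ω ∂μ, Tendsto (fun n => (∑ k ∈ range n, d k ω ^ 2) / b n) atTop (𝓝 (Q ω))) :
    AEMeasurable Q μ :=
  aemeasurable_of_tendsto_metrizable_ae atTop (fun n => ((Finset.measurable_fun_sum _ fun k _ =>
    ((h.measurable k).mono (ℱ.le _) le_rfl).pow_const 2).div_const (b n)).aemeasurable) hQ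

lemma measurable_scaledSum (h : IsBddMartingaleDiff μ ℱ d K) (b : ℕ → ℝ) (n : ℕ) :
    Measurable (scaledSum d b n) :=
  (h.measurable_sum n).div_const _

lemma scaledTrunc [IsFiniteMeasure μ] (h : IsBddMartingaleDiff μ ℱ d K) (b : ℕ → ℝ) (C u : ℝ)
    (n : ℕ) : IsBddMartingaleDiff μ ℱ (scaledTruncDiff d b C u n) (|u / √(b n)| * K) :=
  (h.trunc _).const_mul _

lemma sum_scaledTruncDiff_sq_le (h : IsBddMartingaleDiff μ ℱ d K) {n : ℕ} (hb : 1 ≤ b n) {C : ℝ}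
    (hC : 0 ≤ C) (u : ℝ) (ω : Ω) :
    ∑ k ∈ range n, scaledTruncDiff d b C u n k ω ^ 2 ≤ u ^ 2 * (C + K ^ 2) := by
  have hb0 : 0 < b n := one_pos.trans_le hb
  simp_rw [scaledTruncDiff, mul_pow, div_pow, Real.sq_sqrt hb0.le, ← mul_sum]
  calc u ^ 2 / b n * ∑ k ∈ range n, truncDiff d (C * b n) k ω ^ 2
      ≤ u ^ 2 / b n * (C * b n + K ^ 2) := by
        gcongr
        exact h.sum_truncDiff_sq_le (by positivity) n ω
    _ = u ^ 2 * (C + K ^ 2 / b n) := by field_simp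
    _ ≤ u ^ 2 * (C + K ^ 2) := by
        gcongr
        exact div_le_self (sq_nonneg K) hb

lemma tendsto_integral_smul_exp_sub_exp_mul_mcLeishProd [IsFiniteMeasure μ]
    (h : IsBddMartingaleDiff μ ℱ d K) (hb : Tendsto b atTop atTop) {Q : Ω → ℝ}
    (hQ : ∀ᵐ ω ∂μ, Tendsto (fun n => (∑ k ∈ range n, d k ω ^ 2) / b n) atTop (𝓝 (Q ω)))
    {C : ℝ} (hC : 0 ≤ C) {Z : Ω → ℝ} (hZ : Integrable Z μ) (hZC : ∀ ω, C ≤ Q ω → Z ω = 0) (u : ℝ) :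
    Tendsto (fun n => ∫ ω, Z ω • (Complex.exp ((u * scaledSum d b n ω : ℝ) * I) -
      Real.exp (-(u ^ 2 * Q ω) / 2) *
        mcLeishProd (scaledTruncDiff d b C u n · ω) n) ∂μ) atTop (𝓝 0) := by
  have hQm := h.aemeasurable_of_tendsto_sum_sq_div hQ
  have hTm := h.measurable_scaledSum b
  have hPm (n : ℕ) : AEMeasurable
      (fun ω => mcLeishProd (scaledTruncDiff d b C u n · ω) n) μ :=
    ((h.scaledTrunc b C u n).integrable_mcLeishProd n).1.aemeasurable
  refine tendsto_integral_smul_zero_of_tendsto_zero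
    (B := 1 + 1 * Real.exp (u ^ 2 * (C + K ^ 2) / 2))
    (fun n => AEMeasurable.aestronglyMeasurable (by fun_prop)) ?_ hZ ?_
  · filter_upwards [hb.eventually_ge_atTop 1] with n hn
    filter_upwards [ae_nonneg_of_tendsto_sum_sq_div hb hQ] with ω hω
    refine norm_sub_le_of_le (Complex.norm_exp_ofReal_mul_I _).le ?_
    rw [norm_mul]
    exact mul_le_mul (norm_ofReal_exp_neg_sq_mul_div_two_le_one hω u)
      (norm_mcLeishProd_le (h.sum_scaledTruncDiff_sq_le hn hC u ω)) (norm_nonneg _) zero_le_one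
  · filter_upwards [hQ] with ω hω
    rcases le_or_gt C (Q ω) with hCQ | hQC
    · simp [hZC ω hCQ]
    · have hlim := (tendsto_exp_mul_mcLeishProd_scaledTruncDiff_sub_exp (h.abs_apply_le · ω) hb hω
        hQC u).neg.const_smul (Z ω)
      simpa only [neg_sub, neg_zero, smul_zero] using hlim

/-- On a set where the limiting variance `Q` is bounded by `C`, truncating at `C * b n` changes
nothing in the limit. -/
lemma tendsto_integral_smul_exp_sub_exp_of_lt [IsFiniteMeasure μ]
    (h : IsBddMartingaleDiff μ ℱ d K) (hb : Tendsto b atTop atTop) {Q : Ω → ℝ}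
    (hQ : ∀ᵐ ω ∂μ, Tendsto (fun n => (∑ k ∈ range n, d k ω ^ 2) / b n) atTop (𝓝 (Q ω)))
    {C : ℝ} (hC : 0 ≤ C) {Z : Ω → ℝ} (hZ : Integrable Z μ) (hZC : ∀ ω, C ≤ Q ω → Z ω = 0) (u : ℝ) :
    Tendsto (fun n => ∫ ω, Z ω • (Complex.exp ((u * scaledSum d b n ω : ℝ) * I) -
      Real.exp (-(u ^ 2 * Q ω) / 2)) ∂μ) atTop (𝓝 0) := by
  set P : ℕ → Ω → ℂ := fun n ω => mcLeishProd (scaledTruncDiff d b C u n · ω) n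
  set G : Ω → ℝ := fun ω => Real.exp (-(u ^ 2 * Q ω) / 2)
  have hx := h.scaledTrunc b C u
  have hQm := h.aemeasurable_of_tendsto_sum_sq_div hQ
  have hTm := h.measurable_scaledSum b
  have hG1 : ∀ᵐ ω ∂μ, ‖(G ω : ℂ)‖ ≤ 1 := by
    filter_upwards [ae_nonneg_of_tendsto_sum_sq_div hb hQ] with ω hω
    exact norm_ofReal_exp_neg_sq_mul_div_two_le_one hω u
  have hZG : Integrable (fun ω => Z ω * G ω) μ :=
    hZ.mul_bdd (AEMeasurable.aestronglyMeasurable (by fun_prop))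
      (by simpa only [Complex.norm_real] using hG1)
  have hB : ∀ᶠ n in atTop, ∀ ω, ∑ k ∈ range n, scaledTruncDiff d b C u n k ω ^ 2 ≤
      u ^ 2 * (C + K ^ 2) := by
    filter_upwards [hb.eventually_ge_atTop 1] with n hn
    exact h.sum_scaledTruncDiff_sq_le hn hC u
  have hsum := (h.tendsto_integral_smul_exp_sub_exp_mul_mcLeishProd hb hQ hC hZ hZC u).add
    (tendsto_integral_smul_mcLeishProd_sub_one hx (tendsto_abs_div_sqrt_mul_zero hb u K) hB hZG)
  rw [add_zero] at hsum
  refine hsum.congr fun n => ?_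
  obtain ⟨B, hPB⟩ : ∃ B, ∀ᵐ ω ∂μ, ‖P n ω‖ ≤ B :=
    ⟨_, ae_of_all _ ((hx n).norm_mcLeishProd_le_exp n)⟩
  have hPm : AEMeasurable (P n) μ := ((hx n).integrable_mcLeishProd n).1.aemeasurable
  have hexp_int : Integrable
      (fun ω => Z ω • (Complex.exp ((u * scaledSum d b n ω : ℝ) * I) - G ω * P n ω)) μ := by
    refine hZ.smul_bdd (1 + 1 * B) (AEMeasurable.aestronglyMeasurable (by fun_prop)) ?_
    filter_upwards [hG1, hPB] with ω hG hP
    exact norm_sub_le_of_le (Complex.norm_exp_ofReal_mul_I _).le (norm_mul_le_of_le hG hP)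
  have hP_int : Integrable (fun ω => (Z ω * G ω) • (P n ω - 1)) μ := by
    refine hZG.smul_bdd (B + ‖(1 : ℂ)‖) (AEMeasurable.aestronglyMeasurable (by fun_prop)) ?_
    filter_upwards [hPB] with ω hP using norm_sub_le_of_le hP le_rfl
  rw [← integral_add hexp_int hP_int]
  refine integral_congr_ae (ae_of_all _ fun ω => ?_)
  simp only [Complex.real_smul, Complex.ofReal_mul]
  ring

lemma tendsto_integral_smul_exp_sub_exp [IsFiniteMeasure μ]
    (h : IsBddMartingaleDiff μ ℱ d K) (hb : Tendsto b atTop atTop) {Q : Ω → ℝ}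
    (hQ : ∀ᵐ ω ∂μ, Tendsto (fun n => (∑ k ∈ range n, d k ω ^ 2) / b n) atTop (𝓝 (Q ω)))
    {Z : Ω → ℝ} (hZ : Integrable Z μ) (u : ℝ) :
    Tendsto (fun n => ∫ ω, Z ω • (Complex.exp ((u * scaledSum d b n ω : ℝ) * I) -
      Real.exp (-(u ^ 2 * Q ω) / 2)) ∂μ) atTop (𝓝 0) := by
  have hQm := h.aemeasurable_of_tendsto_sum_sq_div hQ
  have hTm := h.measurable_scaledSum b
  have hZs (m : ℕ) : Integrable ({ω | Q ω < m}.indicator Z) μ :=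
    hZ.indicator₀ (nullMeasurableSet_lt hQm aemeasurable_const)
  refine tendsto_integral_smul_zero_of_tendsto_integral_norm_sub (B := 1 + 1)
    (fun n => AEMeasurable.aestronglyMeasurable (by fun_prop)) (.of_forall fun n => ?_) hZ hZs
    (tendsto_integral_norm_indicator_lt_sub hZ hQm) fun m =>
      h.tendsto_integral_smul_exp_sub_exp_of_lt hb hQ m.cast_nonneg (hZs m)
        (fun ω hω => Set.indicator_of_notMem (s := {ω | Q ω < m}) (not_lt_of_ge hω) Z) u
  filter_upwards [ae_nonneg_of_tendsto_sum_sq_div hb hQ] with ω hω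
  exact norm_sub_le_of_le (Complex.norm_exp_ofReal_mul_I _).le
    (norm_ofReal_exp_neg_sq_mul_div_two_le_one hω u)

/-- The arbitrary integrable weight `Z` is what makes this stable convergence in the sense of Rényi
rather than mere convergence in distribution. -/
theorem tendsto_integral_mul_exp [IsFiniteMeasure μ]
    (h : IsBddMartingaleDiff μ ℱ d K) (hb : Tendsto b atTop atTop) {Q : Ω → ℝ}
    (hQ : ∀ᵐ ω ∂μ, Tendsto (fun n => (∑ k ∈ range n, d k ω ^ 2) / b n) atTop (𝓝 (Q ω)))
    {Z : Ω → ℂ} (hZ : Integrable Z μ) (u : ℝ) :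
    Tendsto (fun n => ∫ ω, Z ω * Complex.exp ((u * scaledSum d b n ω : ℝ) * I) ∂μ) atTop
      (𝓝 (∫ ω, Z ω * Real.exp (-(u ^ 2 * Q ω) / 2) ∂μ)) := by
  have hQm := h.aemeasurable_of_tendsto_sum_sq_div hQ
  have hTm := h.measurable_scaledSum b
  set E : ℕ → Ω → ℂ := fun n ω => Complex.exp ((u * scaledSum d b n ω : ℝ) * I)
  set G : Ω → ℂ := fun ω => Real.exp (-(u ^ 2 * Q ω) / 2)
  have hEm (n : ℕ) : AEStronglyMeasurable (E n) μ := AEMeasurable.aestronglyMeasurable (by fun_prop)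
  have hGm : AEStronglyMeasurable G μ := AEMeasurable.aestronglyMeasurable (by fun_prop)
  have hE1 (n : ℕ) : ∀ᵐ ω ∂μ, ‖E n ω‖ ≤ 1 :=
    ae_of_all _ fun ω => (Complex.norm_exp_ofReal_mul_I _).le
  have hG1 : ∀ᵐ ω ∂μ, ‖G ω‖ ≤ 1 := by
    filter_upwards [ae_nonneg_of_tendsto_sum_sq_div hb hQ] with ω hω
    exact norm_ofReal_exp_neg_sq_mul_div_two_le_one hω u
  have hsum := (h.tendsto_integral_smul_exp_sub_exp hb hQ hZ.re u).add
    ((h.tendsto_integral_smul_exp_sub_exp hb hQ hZ.im u).mul_const I)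
  rw [zero_mul, add_zero] at hsum
  rw [← tendsto_sub_nhds_zero_iff]
  refine hsum.congr fun n => ?_
  have hEG : ∀ᵐ ω ∂μ, ‖E n ω - G ω‖ ≤ 1 + 1 := by
    filter_upwards [hE1 n, hG1] with ω hE hG using norm_sub_le_of_le hE hG
  rw [← integral_sub (hZ.mul_bdd (hEm n) (hE1 n)) (hZ.mul_bdd hGm hG1)]
  simp_rw [← mul_sub]
  exact (integral_mul_eq_integral_re_smul_add hZ ((hEm n).sub hGm) hEG).symm

end IsBddMartingaleDiff

end StableConvergence

section MixedNormalLimit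

variable {m0 : MeasurableSpace Ω} {μ ν : Measure Ω}

lemma charFun_map_toLp_prodMk {S U : Ω → ℝ} (hS : AEMeasurable S ν) (hU : AEMeasurable U ν)
    (s : WithLp 2 (ℝ × ℝ)) :
    charFun (ν.map fun ω => WithLp.toLp 2 (S ω, U ω)) s =
      ∫ ω, Complex.exp ((s.fst * S ω + s.snd * U ω : ℝ) * I) ∂ν := by
  rw [charFun_apply, integral_map (by fun_prop) (by fun_prop)]
  simp [WithLp.prod_inner_apply]

lemma tendstoInDistribution_prodMk_of_tendsto_integral_exp {Ω' : Type*} {m' : MeasurableSpace Ω'}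
    [IsProbabilityMeasure ν] {ν' : Measure Ω'} [IsProbabilityMeasure ν'] {T Y : ℕ → Ω → ℝ}
    {A B : Ω' → ℝ}
    (hT : ∀ n, AEMeasurable (T n) ν) (hY : ∀ n, AEMeasurable (Y n) ν)
    (hA : AEMeasurable A ν') (hB : AEMeasurable B ν')
    (h : ∀ u v : ℝ, Tendsto (fun n => ∫ ω, Complex.exp ((u * T n ω + v * Y n ω : ℝ) * I) ∂ν) atTop
      (𝓝 (∫ z, Complex.exp ((u * A z + v * B z : ℝ) * I) ∂ν'))) :
    TendstoInDistribution (fun n ω => (T n ω, Y n ω)) atTop (fun z => (A z, B z)) (fun _ => ν)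
      ν' := by
  have hLp : TendstoInDistribution (fun n ω => WithLp.toLp 2 (T n ω, Y n ω)) atTop
      (fun z => WithLp.toLp 2 (A z, B z)) (fun _ => ν) ν' :=
    { forall_aemeasurable := fun n => by fun_prop
      aemeasurable_limit := by fun_prop
      tendsto := ProbabilityMeasure.tendsto_of_tendsto_charFun fun s => by
        simpa only [ProbabilityMeasure.coe_mk, charFun_map_toLp_prodMk (hT _) (hY _),
          charFun_map_toLp_prodMk hA hB] using h s.fst s.snd }
  exact hLp.continuous_comp (WithLp.prod_continuous_ofLp 2 ℝ ℝ)

lemma integral_exp_mul_sqrt_mul_add_prod_gaussianReal [IsFiniteMeasure ν] {Q Y : Ω → ℝ}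
    (hQm : AEMeasurable Q ν) (hQ : ∀ᵐ ω ∂ν, 0 ≤ Q ω) (hY : AEMeasurable Y ν) (u v : ℝ) :
    ∫ z : Ω × ℝ, Complex.exp ((u * (√(Q z.1) * z.2) + v * Y z.1 : ℝ) * I)
        ∂ν.prod (gaussianReal 0 1) =
      ∫ ω, Complex.exp ((v * Y ω : ℝ) * I) * Real.exp (-(u ^ 2 * Q ω) / 2) ∂ν := by
  rw [integral_prod _ (.of_bound (AEMeasurable.aestronglyMeasurable (by fun_prop)) 1
    (ae_of_all _ fun z => (Complex.norm_exp_ofReal_mul_I _).le))]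
  refine integral_congr_ae ?_
  filter_upwards [hQ] with ω hω
  calc ∫ g : ℝ, Complex.exp ((u * (√(Q ω) * g) + v * Y ω : ℝ) * I) ∂gaussianReal 0 1
      = ∫ g : ℝ, Complex.exp ((v * Y ω : ℝ) * I) *
          Complex.exp ((u * √(Q ω) : ℝ) * g * I) ∂gaussianReal 0 1 := by
        refine integral_congr_ae (ae_of_all _ fun g => ?_)
        simp only [← Complex.exp_add]
        push_cast
        ring_nf
    _ = Complex.exp ((v * Y ω : ℝ) * I) * Real.exp (-(u ^ 2 * Q ω) / 2) := by
        rw [integral_const_mul, ← charFun_apply_real, charFun_gaussianReal, Complex.ofReal_exp,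
          ← Complex.ofReal_pow, mul_pow, Real.sq_sqrt hω]
        push_cast
        ring_nf

/-- The mixed normal limit is joint with any `Y` and survives the passage from `μ` to an absolutely
continuous `ν`: both are absorbed into the weight of the stable convergence. -/
theorem IsBddMartingaleDiff.tendstoInDistribution_scaledSum_prodMk [IsFiniteMeasure μ]
    [IsProbabilityMeasure ν] {ℱ : Filtration ℕ m0} {d : ℕ → Ω → ℝ} {K : ℝ} {b : ℕ → ℝ}
    (h : IsBddMartingaleDiff μ ℱ d K) (hb : Tendsto b atTop atTop) {Q : Ω → ℝ}
    (hQ : ∀ᵐ ω ∂μ, Tendsto (fun n => (∑ k ∈ range n, d k ω ^ 2) / b n) atTop (𝓝 (Q ω)))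
    (hν : ν ≪ μ) {Y : Ω → ℝ} (hY : AEMeasurable Y ν) :
    TendstoInDistribution (fun n ω => (scaledSum d b n ω, Y ω)) atTop
      (fun z : Ω × ℝ => (√(Q z.1) * z.2, Y z.1)) (fun _ => ν) (ν.prod (gaussianReal 0 1)) := by
  have hQm : AEMeasurable Q ν := (h.aemeasurable_of_tendsto_sum_sq_div hQ).mono_ac hν
  have hQ0 : ∀ᵐ ω ∂ν, 0 ≤ Q ω := hν.ae_le (ae_nonneg_of_tendsto_sum_sq_div hb hQ)
  refine tendstoInDistribution_prodMk_of_tendsto_integral_exp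
    (fun n => (h.measurable_scaledSum b n).aemeasurable) (fun _ => hY) (by fun_prop) hY.comp_fst
    fun u v => ?_
  rw [integral_exp_mul_sqrt_mul_add_prod_gaussianReal hQm hQ0 hY]
  have hexp : Integrable (fun ω => Complex.exp ((v * Y ω : ℝ) * I)) ν :=
    .of_bound (AEMeasurable.aestronglyMeasurable (by fun_prop)) 1
      (ae_of_all _ fun ω => (Complex.norm_exp_ofReal_mul_I _).le)
  have hweight (F : Ω → ℂ) : ∫ ω, (ν.rnDeriv μ ω).toReal • Complex.exp ((v * Y ω : ℝ) * I) * F ω ∂μ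
      = ∫ ω, Complex.exp ((v * Y ω : ℝ) * I) * F ω ∂ν := by
    rw [← integral_rnDeriv_smul hν]
    simp only [smul_mul_assoc]
  have hstable := h.tendsto_integral_mul_exp hb hQ ((integrable_rnDeriv_smul_iff hν).2 hexp) u
  simp only [hweight] at hstable
  refine hstable.congr fun n => integral_congr_ae (ae_of_all _ fun ω => ?_)
  simp only [← Complex.exp_add]
  push_cast
  ring_nf

lemma tendsto_measure_le_of_tendstoInDistribution [IsProbabilityMeasure ν] {Ω' : Type*}
    {m' : MeasurableSpace Ω'} {ν' : Measure Ω'} [IsProbabilityMeasure ν'] {D : ℕ → Ω → ℝ}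
    {D' : Ω' → ℝ} (hD : TendstoInDistribution D atTop D' (fun _ => ν) ν') {c : ℝ}
    (hc : ∀ᵐ z ∂ν', D' z ≠ c) :
    Tendsto (fun n => ν {ω | D n ω ≤ c}) atTop (𝓝 (ν' {z | D' z ≤ c})) := by
  have hfrontier : ν'.map D' (frontier (Set.Iic c)) = 0 := by
    rw [frontier_Iic, Measure.map_apply_of_aemeasurable hD.aemeasurable_limit
      (measurableSet_singleton c)]
    exact measure_eq_zero_iff_ae_notMem.2 hc
  have h := ProbabilityMeasure.tendsto_measure_of_null_frontier_of_tendsto' hD.tendsto hfrontier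
  simp only [ProbabilityMeasure.coe_mk, Measure.map_apply_of_aemeasurable
    (hD.forall_aemeasurable _) measurableSet_Iic,
    Measure.map_apply_of_aemeasurable hD.aemeasurable_limit measurableSet_Iic] at h
  exact h

lemma ae_sqrt_mul_abs_sub_ne_zero [IsProbabilityMeasure ν] {Q : Ω → ℝ} (hQ : ∀ᵐ ω ∂ν, 0 < Q ω)
    (t : ℝ) : ∀ᵐ z ∂ν.prod (gaussianReal 0 1), |√(Q z.1) * z.2| - t * √(Q z.1) ≠ 0 := by
  have := nullSingletonClass_gaussianReal (μ := 0) one_ne_zero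
  have habs : ∀ᵐ g ∂gaussianReal 0 1, g ∉ ({t, -t} : Set ℝ) :=
    (Set.toFinite _).countable.ae_notMem _
  filter_upwards [Measure.quasiMeasurePreserving_fst.ae hQ,
    Measure.quasiMeasurePreserving_snd.ae habs] with z hz hzt hzero
  rw [abs_mul, abs_of_nonneg (Real.sqrt_nonneg _), mul_comm t, ← mul_sub, mul_eq_zero,
    or_iff_right (Real.sqrt_pos.2 hz).ne', sub_eq_zero] at hzero
  exact hzt (eq_or_eq_neg_of_abs_eq hzero)

namespace IsBddMartingaleDiff

variable {ℱ : Filtration ℕ m0} {d : ℕ → Ω → ℝ} {K : ℝ} {b : ℕ → ℝ} {Q : Ω → ℝ} {W : ℕ → Ω → ℝ}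

lemma tendstoInDistribution_abs_scaledSum_sub [IsFiniteMeasure μ] [IsProbabilityMeasure ν]
    (h : IsBddMartingaleDiff μ ℱ d K) (hb : Tendsto b atTop atTop)
    (hQ : ∀ᵐ ω ∂μ, Tendsto (fun n => (∑ k ∈ range n, d k ω ^ 2) / b n) atTop (𝓝 (Q ω)))
    (hν : ν ≪ μ) (hW : ∀ n, AEMeasurable (W n) ν)
    (hWQ : ∀ᵐ ω ∂ν, Tendsto (fun n => W n ω / b n) atTop (𝓝 (Q ω))) (t : ℝ) :
    TendstoInDistribution (fun n ω => |scaledSum d b n ω| - t * √(W n ω / b n)) atTop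
      (fun z : Ω × ℝ => |√(Q z.1) * z.2| - t * √(Q z.1)) (fun _ => ν)
      (ν.prod (gaussianReal 0 1)) := by
  have hQm : AEMeasurable Q ν := (h.aemeasurable_of_tendsto_sum_sq_div hQ).mono_ac hν
  have hTm := h.measurable_scaledSum b
  have hjoint := h.tendstoInDistribution_scaledSum_prodMk hb hQ hν hQm.sqrt
  have hcont : Continuous fun y : ℝ × ℝ => |y.1| - t * y.2 := by fun_prop
  refine tendstoInDistribution_of_tendstoInMeasure_sub _ _ (hjoint.continuous_comp hcont)
    (tendstoInMeasure_of_tendsto_ae (fun n => AEMeasurable.aestronglyMeasurable ?_) ?_)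
    (fun n => by fun_prop)
  · exact .sub (by fun_prop) (hcont.measurable.comp_aemeasurable (by fun_prop))
  · filter_upwards [hWQ] with ω hω
    have hlim := ((hω.sqrt.const_mul t).const_sub (t * √(Q ω)))
    simpa using hlim

/-- A random normalisation `W n` that is asymptotic to the sum of squares cancels the random
variance of the mixed normal limit. -/
theorem tendsto_measure_abs_sum_le [IsFiniteMeasure μ] [IsProbabilityMeasure ν]
    (h : IsBddMartingaleDiff μ ℱ d K) (hb : Tendsto b atTop atTop)
    (hQ : ∀ᵐ ω ∂μ, Tendsto (fun n => (∑ k ∈ range n, d k ω ^ 2) / b n) atTop (𝓝 (Q ω)))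
    (hν : ν ≪ μ) (hQ_pos : ∀ᵐ ω ∂ν, 0 < Q ω) (hW : ∀ n, AEMeasurable (W n) ν)
    (hWQ : ∀ᵐ ω ∂ν, Tendsto (fun n => W n ω / b n) atTop (𝓝 (Q ω))) (t : ℝ) :
    Tendsto (fun n => ν {ω | |∑ k ∈ range n, d k ω| ≤ t * √(W n ω)}) atTop
      (𝓝 (gaussianReal 0 1 (Set.Icc (-t) t))) := by
  have hlim := tendsto_measure_le_of_tendstoInDistribution
    (h.tendstoInDistribution_abs_scaledSum_sub hb hQ hν hW hWQ t)
    (ae_sqrt_mul_abs_sub_ne_zero hQ_pos t)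
  have hlimit : (ν.prod (gaussianReal 0 1)) {z | |√(Q z.1) * z.2| - t * √(Q z.1) ≤ 0} =
      gaussianReal 0 1 (Set.Icc (-t) t) := by
    rw [← (measurePreserving_snd (μ := ν)).measure_preimage measurableSet_Icc.nullMeasurableSet]
    refine measure_congr ?_
    filter_upwards [Measure.quasiMeasurePreserving_fst.ae hQ_pos] with z hz
    refine propext ?_
    change |√(Q z.1) * z.2| - t * √(Q z.1) ≤ 0 ↔ z.2 ∈ Set.Icc (-t) t
    rw [abs_mul, abs_of_nonneg (Real.sqrt_nonneg _), sub_nonpos, mul_comm t,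
      mul_le_mul_iff_right₀ (Real.sqrt_pos.2 hz), abs_le, Set.mem_Icc]
  rw [hlimit] at hlim
  refine hlim.congr' ?_
  filter_upwards [hb.eventually_gt_atTop 0] with n hn
  congr 1 with ω
  rw [Set.mem_ofPred_eq, Set.mem_ofPred_eq, scaledSum, Real.sqrt_div' _ hn.le, abs_div,
    abs_of_nonneg (Real.sqrt_nonneg (b n)), sub_nonpos, ← mul_div_assoc,
    div_le_div_iff_of_pos_right (Real.sqrt_pos.2 hn)]

end IsBddMartingaleDiff

lemma measureReal_gaussianReal_Iic_neg {v : ℝ≥0} (hv : v ≠ 0) (t : ℝ) :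
    (gaussianReal 0 v).real (Set.Iic (-t)) = 1 - (gaussianReal 0 v).real (Set.Iic t) := by
  have := nullSingletonClass_gaussianReal (μ := 0) hv
  have hsymm : (gaussianReal 0 v).real (Set.Ici t) = (gaussianReal 0 v).real (Set.Iic (-t)) := by
    have hmap := gaussianReal_map_neg (μ := 0) (v := v)
    rw [neg_zero] at hmap
    conv_lhs => rw [← hmap, map_measureReal_apply measurable_neg measurableSet_Ici]
    simp
  rw [← hsymm, ← measureReal_congr Ioi_ae_eq_Ici, ← Set.compl_Iic,
    probReal_compl_eq_one_sub measurableSet_Iic]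

lemma measureReal_gaussianReal_Icc_neg {v : ℝ≥0} (hv : v ≠ 0) {t : ℝ}
    (ht : 1 / 2 ≤ (gaussianReal 0 v).real (Set.Iic t)) :
    (gaussianReal 0 v).real (Set.Icc (-t) t) = 2 * (gaussianReal 0 v).real (Set.Iic t) - 1 := by
  have := nullSingletonClass_gaussianReal (μ := 0) hv
  have hsymm := measureReal_gaussianReal_Iic_neg hv t
  rcases le_or_gt (-t) t with h | h
  · rw [← measureReal_congr Ioc_ae_eq_Icc, ← Set.Iic_sdiff_Iic,
      measureReal_sdiff (Set.Iic_subset_Iic.2 h) measurableSet_Iic, hsymm]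
    ring
  · have hmono := measureReal_mono (μ := gaussianReal 0 v) (Set.Iic_subset_Iic.2 h.le)
    rw [Set.Icc_eq_empty h.not_ge, measureReal_empty]
    linarith

end MixedNormalLimit

section ElephantRandomWalk

lemma tendsto_sum_mul_div_sum {w u : ℕ → ℝ} {l : ℝ} (hw : ∀ k, 0 ≤ w k)
    (hsum : Tendsto (fun n => ∑ k ∈ range n, w k) atTop atTop) (hu : Tendsto u atTop (𝓝 l)) :
    Tendsto (fun n => (∑ k ∈ range n, w k * u k) / ∑ k ∈ range n, w k) atTop (𝓝 l) := by
  have hlo : (fun k => w k * (u k - l)) =o[atTop] w := by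
    simpa using (Asymptotics.isBigO_refl w atTop).mul_isLittleO
      ((Asymptotics.isLittleO_one_iff ℝ).2 (tendsto_sub_nhds_zero_iff.2 hu))
  have hlim := ((hlo.sum_range hw hsum).tendsto_div_nhds_zero).const_add l
  rw [add_zero] at hlim
  refine hlim.congr' ?_
  filter_upwards [hsum.eventually_gt_atTop 0] with n hn
  simp only [mul_sub, sum_sub_distrib, ← sum_mul]
  field_simp
  ring

lemma tendsto_sum_range_rpow_atTop {s : ℝ} (hs : -1 ≤ s) :
    Tendsto (fun n => ∑ k ∈ range n, (k : ℝ) ^ s) atTop atTop := by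
  rw [← not_summable_iff_tendsto_nat_atTop_of_nonneg (fun k => by positivity),
    Real.summable_nat_rpow]
  exact hs.not_gt

lemma sq_div_eq_rpow_mul_sq (x a : ℝ) (k : ℕ) :
    (x / k) ^ 2 = (k : ℝ) ^ (2 * a - 2) * (x / (k : ℝ) ^ a) ^ 2 := by
  rcases k.eq_zero_or_pos with rfl | hk
  · rcases eq_or_ne a 1 with rfl | ha
    · simp
    · have hexp : 2 * a - 2 ≠ 0 := fun h => ha (by linarith)
      simp [Real.zero_rpow hexp]
  · have hk' : (0 : ℝ) < k := Nat.cast_pos.2 hk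
    have hpow : (k : ℝ) ^ (2 * a - 2) = ((k : ℝ) ^ a) ^ 2 / (k : ℝ) ^ 2 := by
      rw [Real.rpow_sub hk', mul_comm, Real.rpow_mul hk'.le, Real.rpow_two, Real.rpow_two]
    rw [hpow]
    field_simp

lemma tendsto_div_natCast_zero_of_tendsto_div_rpow {s : ℕ → ℝ} {a l : ℝ} (ha : a < 1)
    (h : Tendsto (fun n => s n / (n : ℝ) ^ a) atTop (𝓝 l)) :
    Tendsto (fun n => s n / n) atTop (𝓝 0) := by
  have hpow : Tendsto (fun n : ℕ => (n : ℝ) ^ (-(1 - a))) atTop (𝓝 0) :=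
    (tendsto_rpow_neg_atTop (sub_pos.2 ha)).comp tendsto_natCast_atTop_atTop
  have hmul := h.mul hpow
  rw [mul_zero] at hmul
  refine hmul.congr' ?_
  filter_upwards [eventually_gt_atTop 0] with n hn
  have hn' : (0 : ℝ) < n := Nat.cast_pos.2 hn
  rw [neg_sub, Real.rpow_sub_one hn'.ne']
  field_simp

lemma tendsto_sum_sq_div_natCast_div_sum_rpow {s : ℕ → ℝ} {a l : ℝ} (ha : 1 / 2 ≤ a)
    (h : Tendsto (fun n => s n / (n : ℝ) ^ a) atTop (𝓝 l)) :
    Tendsto (fun n => (∑ k ∈ range n, (s k / k) ^ 2) / ∑ k ∈ range n, (k : ℝ) ^ (2 * a - 2)) atTop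
      (𝓝 (l ^ 2)) := by
  simp only [sq_div_eq_rpow_mul_sq _ a]
  exact tendsto_sum_mul_div_sum (fun k => by positivity)
    (tendsto_sum_range_rpow_atTop (by linarith)) (h.pow 2)

lemma sum_Icc_one_sub_one_eq_sum_range {f : ℕ → ℝ} (hf : f 0 = 0) (n : ℕ) :
    ∑ k ∈ Icc 1 (n - 1), f k = ∑ k ∈ range n, f k := by
  refine sum_subset (fun k hk => ?_) (fun k hk hk' => ?_)
  · simp only [Finset.mem_Icc, Finset.mem_range] at *
    omega
  · obtain rfl : k = 0 := by
      simp only [Finset.mem_Icc, Finset.mem_range] at *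
      omega
    exact hf

/-- The innovation of the walk: the step at time `k + 1` minus its conditional expectation given the
past. -/
def erwInnovation (X : ℕ → Ω → ℝ) (p : ℝ) (k : ℕ) (ω : Ω) : ℝ :=
  X (k + 1) ω - (2 * p - 1) * (erwS X k ω / k)

/-- The increments of the quasi-score martingale, whose value at time `n` is
`2 (p̂ n - p) ∑ (S k / k)²`. The convention `x / 0 = 0` makes the term `k = 0` vanish. -/
def erwScore (X : ℕ → Ω → ℝ) (p : ℝ) (k : ℕ) (ω : Ω) : ℝ :=
  erwS X k ω / k * erwInnovation X p k ω

lemma erwV_eq_sum_range (X : ℕ → Ω → ℝ) (n : ℕ) (ω : Ω) :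
    erwV X n ω = 4 * ∑ k ∈ range n, (erwS X k ω / k) ^ 2 := by
  rw [erwV, sum_Icc_one_sub_one_eq_sum_range (f := fun k : ℕ => (erwS X k ω / k) ^ 2) (by simp)]

lemma erwPhat_sub_eq {X : ℕ → Ω → ℝ} {n : ℕ} {ω : Ω}
    (h : ∑ k ∈ range n, (erwS X k ω / k) ^ 2 ≠ 0) (p : ℝ) :
    erwPhat X n ω - p =
      (∑ k ∈ range n, erwScore X p k ω) / (2 * ∑ k ∈ range n, (erwS X k ω / k) ^ 2) := by
  have hnum : ∑ k ∈ range n, erwS X k ω / k * (X (k + 1) ω + erwS X k ω / k) =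
      ∑ k ∈ range n, erwScore X p k ω + 2 * p * ∑ k ∈ range n, (erwS X k ω / k) ^ 2 := by
    rw [mul_sum, ← sum_add_distrib]
    refine sum_congr rfl fun k _ => ?_
    rw [erwScore, erwInnovation]
    ring
  rw [erwPhat,
    sum_Icc_one_sub_one_eq_sum_range
      (f := fun k : ℕ => erwS X k ω / k * (X (k + 1) ω + erwS X k ω / k)) (by simp),
    sum_Icc_one_sub_one_eq_sum_range (f := fun k : ℕ => (erwS X k ω / k) ^ 2) (by simp), hnum,
    add_div, mul_comm 2 p, mul_assoc, mul_div_cancel_right₀ _ (mul_ne_zero two_ne_zero h),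
    add_sub_cancel_right]

namespace IsERW

variable {m0 : MeasurableSpace Ω} {μ : Measure Ω} {ℱ : Filtration ℕ m0} {X : ℕ → Ω → ℝ} {p : ℝ}

lemma abs_step (h : IsERW μ ℱ X p) {k : ℕ} (hk : 1 ≤ k) (ω : Ω) : |X k ω| = 1 := by
  rcases h.2.2.1 k hk ω with hX | hX <;> simp [hX]

lemma measurable_step (h : IsERW μ ℱ X p) {k : ℕ} (hk : 1 ≤ k) : Measurable[ℱ k] (X k) :=
  h.2.2.2.1 k hk

lemma measurable_erwS (h : IsERW μ ℱ X p) (k : ℕ) : Measurable[ℱ k] (erwS X k) :=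
  Finset.measurable_fun_sum _ fun _ hj =>
    (h.measurable_step (Finset.mem_Icc.1 hj).1).mono (ℱ.mono (Finset.mem_Icc.1 hj).2) le_rfl

lemma abs_erwS_div_le_one (h : IsERW μ ℱ X p) (k : ℕ) (ω : Ω) : |erwS X k ω / k| ≤ 1 := by
  rw [abs_div, Nat.abs_cast]
  refine div_le_one_of_le₀ ?_ (Nat.cast_nonneg k)
  calc |erwS X k ω| ≤ ∑ j ∈ Icc 1 k, |X j ω| := abs_sum_le_sum_abs _ _
    _ = ∑ j ∈ Icc 1 k, 1 := sum_congr rfl fun j hj => h.abs_step (Finset.mem_Icc.1 hj).1 ω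
    _ = k := by simp

lemma abs_drift_le_one (h : IsERW μ ℱ X p) (k : ℕ) (ω : Ω) :
    |(2 * p - 1) * (erwS X k ω / k)| ≤ 1 := by
  have ha : |2 * p - 1| ≤ 1 := abs_le.2 ⟨by linarith [h.1], by linarith [h.2.1]⟩
  rw [abs_mul]
  exact mul_le_one₀ ha (abs_nonneg _) (h.abs_erwS_div_le_one k ω)

lemma integrable_step [IsFiniteMeasure μ] (h : IsERW μ ℱ X p) {k : ℕ} (hk : 1 ≤ k) :
    Integrable (X k) μ :=
  .of_bound ((h.measurable_step hk).mono (ℱ.le k) le_rfl).aestronglyMeasurable 1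
    (ae_of_all _ fun ω => (h.abs_step hk ω).le)

lemma measurable_erwInnovation (h : IsERW μ ℱ X p) (k : ℕ) :
    Measurable[ℱ (k + 1)] (erwInnovation X p k) :=
  (h.measurable_step k.succ_pos).sub
    ((((h.measurable_erwS k).mono (ℱ.mono k.le_succ) le_rfl).div_const _).const_mul _)

lemma abs_erwInnovation_le_two (h : IsERW μ ℱ X p) (k : ℕ) (ω : Ω) :
    |erwInnovation X p k ω| ≤ 2 := by
  calc _ ≤ |X (k + 1) ω| + |(2 * p - 1) * (erwS X k ω / k)| := abs_sub _ _
    _ ≤ 1 + 1 := add_le_add (h.abs_step k.succ_pos ω).le (h.abs_drift_le_one k ω)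
    _ = 2 := one_add_one_eq_two

lemma condExp_erwInnovation [IsFiniteMeasure μ] (h : IsERW μ ℱ X p) {k : ℕ} (hk : 1 ≤ k) :
    μ[erwInnovation X p k | ℱ k] =ᵐ[μ] 0 := by
  have hmeas : Measurable[ℱ k] fun ω => (2 * p - 1) * (erwS X k ω / k) :=
    ((h.measurable_erwS k).div_const _).const_mul _
  have hint : Integrable (fun ω => (2 * p - 1) * (erwS X k ω / k)) μ :=
    .of_bound (hmeas.mono (ℱ.le k) le_rfl).aestronglyMeasurable 1
      (ae_of_all _ (h.abs_drift_le_one k))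
  have hsub := condExp_sub (h.integrable_step k.succ_pos) hint (ℱ k)
  rw [condExp_of_stronglyMeasurable (ℱ.le k) hmeas.stronglyMeasurable hint] at hsub
  filter_upwards [hsub, h.2.2.2.2 k hk] with ω hω hstep
  exact hω.trans (sub_eq_zero.2 hstep)

lemma condExp_erwScore [IsFiniteMeasure μ] (h : IsERW μ ℱ X p) (k : ℕ) :
    μ[erwScore X p k | ℱ k] =ᵐ[μ] 0 := by
  rcases k.eq_zero_or_pos with rfl | hk
  · have hzero : erwScore X p 0 = 0 := by
      ext ω
      simp [erwScore]
    rw [hzero, condExp_zero]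
  · have hint : Integrable (erwInnovation X p k) μ :=
      .of_bound ((h.measurable_erwInnovation k).mono (ℱ.le _) le_rfl).aestronglyMeasurable 2
        (ae_of_all _ (h.abs_erwInnovation_le_two k))
    have hpull := condExp_stronglyMeasurable_mul_of_bound (ℱ.le k)
      ((h.measurable_erwS k).div_const (k : ℝ)).stronglyMeasurable hint 1
      (ae_of_all _ (h.abs_erwS_div_le_one k))
    filter_upwards [hpull, h.condExp_erwInnovation hk] with ω hω hzero
    exact hω.trans (mul_eq_zero_of_right _ hzero)

lemma isBddMartingaleDiff_erwScore [IsFiniteMeasure μ] (h : IsERW μ ℱ X p) :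
    IsBddMartingaleDiff μ ℱ (erwScore X p) 2 where
  measurable k := (((h.measurable_erwS k).mono (ℱ.mono k.le_succ) le_rfl).div_const _).mul
    (h.measurable_erwInnovation k)
  abs_apply_le k ω := by
    rw [erwScore, abs_mul, ← one_mul (2 : ℝ)]
    exact mul_le_mul (h.abs_erwS_div_le_one k ω) (h.abs_erwInnovation_le_two k ω) (abs_nonneg _)
      zero_le_one
  condExp_eq_zero := h.condExp_erwScore

lemma tendsto_sq_erwInnovation (h : IsERW μ ℱ X p) {ω : Ω}
    (hS : Tendsto (fun k : ℕ => erwS X k ω / k) atTop (𝓝 0)) :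
    Tendsto (fun k => erwInnovation X p k ω ^ 2) atTop (𝓝 1) := by
  have hdrift : Tendsto (fun k : ℕ => |(2 * p - 1) * (erwS X k ω / k)|) atTop (𝓝 0) := by
    simpa using (hS.const_mul (2 * p - 1)).abs
  have habs : Tendsto (fun k => |erwInnovation X p k ω|) atTop (𝓝 1) := by
    refine tendsto_iff_norm_sub_tendsto_zero.2
      (squeeze_zero (fun _ => norm_nonneg _) (fun k => ?_) hdrift)
    calc ‖|erwInnovation X p k ω| - 1‖ = |(|erwInnovation X p k ω| - |X (k + 1) ω|)| := by
          rw [h.abs_step k.succ_pos, Real.norm_eq_abs]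
      _ ≤ |erwInnovation X p k ω - X (k + 1) ω| := abs_abs_sub_abs_le _ _
      _ = |(2 * p - 1) * (erwS X k ω / k)| := by
          rw [erwInnovation, sub_sub_cancel_left, abs_neg]
  simpa using habs.pow 2

lemma tendsto_sum_sq_erwScore_div (h : IsERW μ ℱ X p) {ω : Ω} {l : ℝ} (hp : 3 / 4 ≤ p)
    (hp' : p < 1) (hl : Tendsto (fun n => erwS X n ω / (n : ℝ) ^ (2 * p - 1)) atTop (𝓝 l)) :
    Tendsto (fun n => (∑ k ∈ range n, erwScore X p k ω ^ 2) /
      ∑ k ∈ range n, (k : ℝ) ^ (2 * (2 * p - 1) - 2)) atTop (𝓝 (l ^ 2)) := by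
  have hinn := h.tendsto_sq_erwInnovation
    (tendsto_div_natCast_zero_of_tendsto_div_rpow (by linarith) hl)
  simp only [erwScore, mul_pow, sq_div_eq_rpow_mul_sq _ (2 * p - 1), mul_assoc]
  refine tendsto_sum_mul_div_sum (fun k => by positivity)
    (tendsto_sum_range_rpow_atTop (by linarith)) ?_
  simpa using (hl.pow 2).mul hinn

lemma abs_erwPhat_sub_le_iff (h : IsERW μ ℱ X p) (q t : ℝ) {n : ℕ} (hn : 2 ≤ n) (ω : Ω) :
    |erwPhat X n ω - q| ≤ t / √(erwV X n ω) ↔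
      |∑ k ∈ range n, erwScore X q k ω| ≤ t * √(∑ k ∈ range n, (erwS X k ω / k) ^ 2) := by
  set A := ∑ k ∈ range n, (erwS X k ω / k) ^ 2
  have hA : 0 < A := by
    refine sum_pos' (fun k _ => sq_nonneg _) ⟨1, Finset.mem_range.2 hn, ?_⟩
    have hS : erwS X 1 ω = X 1 ω := by simp [erwS]
    rw [Nat.cast_one, div_one, hS, ← sq_abs, h.abs_step le_rfl, one_pow]
    exact one_pos
  have hsqrt : √(4 * A) = 2 * √A := by
    rw [Real.sqrt_mul zero_le_four, show (4 : ℝ) = 2 ^ 2 by norm_num, Real.sqrt_sq zero_le_two]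
  rw [erwPhat_sub_eq hA.ne', erwV_eq_sum_range, hsqrt, abs_div, abs_of_pos (mul_pos two_pos hA),
    div_le_iff₀ (mul_pos two_pos hA)]
  have hcancel : t / (2 * √A) * (2 * A) = t * √A := by
    nth_rw 2 [← Real.mul_self_sqrt hA.le]
    field_simp
  rw [hcancel]

end IsERW

end ElephantRandomWalk

/-- Asymptotic confidence interval in the superdiffusive regime `3/4 < p < 1`:
conditionally on `{L² > 0}`, the coverage probability of `[p̂_n ± t_{1-α/2}/√(V_n)]`
converges to `1 - α`. -/
theorem erw_confidence_interval_superdiffusive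
    {m0 : MeasurableSpace Ω} (μ : Measure Ω) [IsProbabilityMeasure μ]
    (ℱ : Filtration ℕ m0) (X : ℕ → Ω → ℝ) (p : ℝ)
    (hERW : IsERW μ ℱ X p) (hp : 3 / 4 < p) (hp' : p < 1) (L : Ω → ℝ)
    (hL : ∀ᵐ ω ∂μ, Tendsto (fun n => erwS X n ω / (n : ℝ) ^ (2 * p - 1)) atTop (𝓝 (L ω)))
    (hLpos : 0 < μ {ω | 0 < L ω ^ 2})
    (α t : ℝ) (hα : 0 < α) (hα' : α < 1)
    (ht : ((gaussianReal 0 1) (Set.Iic t)).toReal = 1 - α / 2) :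
    Tendsto (fun n => ((μ[|{ω | 0 < L ω ^ 2}])
        {ω | |erwPhat X n ω - p| ≤ t / Real.sqrt (erwV X n ω)}).toReal)
      atTop (𝓝 (1 - α)) := by
  set ν := μ[|{ω | 0 < L ω ^ 2}]
  have : IsProbabilityMeasure ν := cond_isProbabilityMeasure hLpos.ne'
  have hνμ : ν ≪ μ := cond_absolutelyContinuous
  have hLm : AEMeasurable L μ := aemeasurable_of_tendsto_metrizable_ae atTop
    (fun n => (((hERW.measurable_erwS n).mono (ℱ.le n) le_rfl).div_const _).aemeasurable) hL
  have hν_pos : ∀ᵐ ω ∂ν, 0 < L ω ^ 2 :=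
    ae_cond_mem₀ (nullMeasurableSet_lt aemeasurable_const (hLm.pow_const 2))
  have hsq_meas : ∀ n, AEMeasurable (fun ω => ∑ k ∈ range n, (erwS X k ω / k) ^ 2) ν :=
    fun n => (Finset.measurable_fun_sum _ fun k _ =>
      (((hERW.measurable_erwS k).mono (ℱ.le k) le_rfl).div_const _).pow_const 2).aemeasurable
  have hcover := hERW.isBddMartingaleDiff_erwScore.tendsto_measure_abs_sum_le
    (tendsto_sum_range_rpow_atTop (s := 2 * (2 * p - 1) - 2) (by linarith))
    (hL.mono fun ω => hERW.tendsto_sum_sq_erwScore_div hp.le hp') hνμ hν_pos hsq_meas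
    (hνμ.ae_le (hL.mono fun ω => tendsto_sum_sq_div_natCast_div_sum_rpow (by linarith))) t
  have hgauss : (gaussianReal 0 1 (Set.Icc (-t) t)).toReal = 1 - α := by
    rw [← measureReal_def] at ht ⊢
    rw [measureReal_gaussianReal_Icc_neg one_ne_zero (by linarith), ht]
    ring
  rw [← hgauss]
  refine ((ENNReal.tendsto_toReal (measure_ne_top _ _)).comp hcover).congr' ?_
  filter_upwards [eventually_ge_atTop 2] with n hn
  simp only [Function.comp_apply, hERW.abs_erwPhat_sub_le_iff p t hn]
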